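/- Let u ∈ H¹(𝕋³; ℝ³) and define Γ̄(ℓ) = (1/(4π)) ∫_{S²} ∫_{𝕋³} u(x)·u(x+ℓn) dx dS(n). Then |Γ̄'(ℓ)| ≤ ℓ ‖∇u‖_{L²(𝕋³)}² for all ℓ > 0. -/

import Mathlib

open MeasureTheory Metric Filter Real Set
open scoped Topology RealInnerProductSpace ENNReal

noncomputable section

abbrev E3 := EuclideanSpace ℝ (Fin 3)

/-- Fundamental domain of the torus `𝕋³ = ℝ³/ℤ³`. -/
def fundDom : Set E3 := {x | ∀ i, x i ∈ Set.Ico (0:ℝ) 1}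

/-- Surface measure on the unit sphere `S² ⊆ ℝ³` (total mass `4π`). -/
def sphμ : Measure (Metric.sphere (0:E3) 1) := (volume : Measure E3).toSphere

/-- Standard basis vectors of `ℝ³`. -/
def e3 (i : Fin 3) : E3 := EuclideanSpace.single i 1


/-- Frobenius norm squared of the gradient: `∑ᵢⱼ (∂ⱼ uⁱ)²`. -/
def gradSq (u : E3 → E3) (x : E3) : ℝ := ∑ i, ∑ j, (fderiv ℝ u x (e3 j) i) ^ 2

lemma fundDom_eq : fundDom = ZSpan.fundamentalDomain (EuclideanSpace.basisFun (Fin 3) ℝ).toBasis := by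
  ext x
  simp [fundDom, ZSpan.mem_fundamentalDomain]

lemma fundDom_bdd : Bornology.IsBounded fundDom := by
  rw [fundDom_eq]; exact ZSpan.fundamentalDomain_isBounded _

lemma fundDom_meas : MeasurableSet fundDom := by
  rw [fundDom_eq]; exact ZSpan.fundamentalDomain_measurableSet _

lemma fundDom_intOn {f : E3 → ℝ} (hf : Continuous f) : IntegrableOn f fundDom :=
  (hf.locallyIntegrable.integrableOn_isCompact fundDom_bdd.isCompact_closure).mono_set
    subset_closure

lemma per_span {f : E3 → ℝ} (hf : ∀ x k, f (x + e3 k) = f x) (v : E3)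
    (hv : v ∈ Submodule.span ℤ (Set.range (EuclideanSpace.basisFun (Fin 3) ℝ).toBasis)) :
    ∀ x, f (v + x) = f x := by
  induction hv using Submodule.span_induction with
  | mem v h =>
    obtain ⟨k, rfl⟩ := h
    intro x
    rw [add_comm]
    simpa [e3] using hf x k
  | zero => simp
  | add a b _ _ ha hb => intro x; rw [add_assoc, ha, hb]
  | smul c a _ ha =>
    induction c using Int.induction_on with
    | zero => simp
    | succ n ih => intro x; rw [add_smul, one_smul, add_assoc, ih, ha]
    | pred n ih =>
      intro x
      rw [← ha, sub_smul, one_smul, ← ih x]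
      congr 1; abel

lemma trans_int {f : E3 → ℝ} (hf : ∀ x k, f (x + e3 k) = f x) (v : E3) :
    ∫ x in fundDom, f (x + v) = ∫ x in fundDom, f x := by
  have h := ZSpan.isAddFundamentalDomain' (EuclideanSpace.basisFun (Fin 3) ℝ).toBasis
    (volume : Measure E3)
  rw [← fundDom_eq] at h
  have : Countable (Submodule.span ℤ
      (Set.range (EuclideanSpace.basisFun (Fin 3) ℝ).toBasis)).toAddSubgroup :=
    inferInstanceAs (Countable (Submodule.span ℤ
      (Set.range (EuclideanSpace.basisFun (Fin 3) ℝ).toBasis)))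
  have h2 := h.vadd_of_comm v
  have h3 := h.setIntegral_eq h2 (f := f) (fun g x => per_span hf g.1 g.2 x)
  rw [h3]
  have := (measurePreserving_add_right (volume : Measure E3) v).setIntegral_image_emb
    (measurableEmbedding_addRight v) f fundDom
  rw [← this]
  congr 2
  ext y
  constructor
  · rintro ⟨z, hz, rfl⟩
    exact ⟨z, hz, add_comm v z⟩
  · rintro ⟨z, hz, rfl⟩
    exact ⟨z, hz, add_comm z v⟩

lemma sphμ_univ : sphμ.real univ = 4 * π := by
  rw [sphμ, Measure.toSphere_real_apply_univ, measureReal_def, EuclideanSpace.volume_ball_fin_three]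
  have : (0:ℝ) ≤ π * 4 / 3 := by positivity
  simp [ENNReal.toReal_ofReal this]
  ring

lemma gradSq_cont {u : E3 → E3} (hu : ContDiff ℝ 1 u) : Continuous (gradSq u) := by
  have := hu.continuous_fderiv (by norm_num)
  unfold gradSq
  fun_prop

lemma gradSq_nonneg (u : E3 → E3) (x : E3) : 0 ≤ gradSq u x := by
  unfold gradSq; positivity

lemma gradSq_per {u : E3 → E3} (hper : ∀ (x : E3) (k : Fin 3), u (x + e3 k) = u x) (x : E3)
    (k : Fin 3) : gradSq u (x + e3 k) = gradSq u x := by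
  have : fderiv ℝ u (x + e3 k) = fderiv ℝ u x := by
    rw [← fderiv_comp_add_right]
    congr 1
    ext1 y
    exact hper y k
  simp [gradSq, this]

lemma dir_le (u : E3 → E3) (x n : E3) (hn : ‖n‖ = 1) :
    ‖fderiv ℝ u x n‖ ^ 2 ≤ gradSq u x := by
  have hn' : n = ∑ j, n j • e3 j := by
    ext i
    simp [e3, Fin.sum_univ_three]
    fin_cases i <;> simp
  have h1 : ∑ j, n j ^ 2 = 1 := by
    have := EuclideanSpace.real_norm_sq_eq n
    rw [← this, hn]; norm_num
  rw [EuclideanSpace.real_norm_sq_eq, gradSq]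
  refine Finset.sum_le_sum fun i _ => ?_
  have h2 : (fderiv ℝ u x n) i = ∑ j, n j * fderiv ℝ u x (e3 j) i := by
    conv_lhs => rw [hn', map_sum]
    simp
  rw [h2]
  refine (Finset.sum_mul_sq_le_sq_mul_sq _ _ _).trans ?_
  rw [h1, one_mul]

lemma pt_bound {u : E3 → E3} (hu : ContDiff ℝ 1 u) (x n : E3) (hn : ‖n‖ = 1) (h : ℝ) :
    ‖u (x + h • n) - u x‖ ^ 2 ≤ h ^ 2 * ∫ s in (0:ℝ)..1, gradSq u (x + s • h • n) := by
  set w := u (x + h • n) - u x with hw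
  have hc := hu.continuous_fderiv (by norm_num)
  have hg := gradSq_cont hu
  have hd : ∀ s : ℝ, HasDerivAt (fun s : ℝ => ⟪w, u (x + s • h • n)⟫)
      ⟪w, fderiv ℝ u (x + s • h • n) (h • n)⟫ s := by
    intro s
    have h1 : HasDerivAt (fun s : ℝ => x + s • h • n) (h • n) s := by
      simpa using ((hasDerivAt_id s).smul_const (h • n)).const_add x
    have h2 := ((hu.differentiable (by norm_num)) (x + s • h • n)).hasFDerivAt.comp_hasDerivAt s h1
    simpa using (hasDerivAt_const s w).inner ℝ h2
  have hcont : Continuous fun s : ℝ => ⟪w, fderiv ℝ u (x + s • h • n) (h • n)⟫ := by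
    fun_prop
  have h3 := intervalIntegral.integral_eq_sub_of_hasDerivAt (a := 0) (b := 1)
    (fun s _ => hd s) (hcont.intervalIntegrable _ _)
  have h4 : ‖w‖ ^ 2 = ∫ s in (0:ℝ)..1, ⟪w, fderiv ℝ u (x + s • h • n) (h • n)⟫ := by
    rw [h3, ← inner_sub_right]
    simp [← hw]
  have h5 : ∫ s in (0:ℝ)..1, ⟪w, fderiv ℝ u (x + s • h • n) (h • n)⟫ ≤
      ∫ s in (0:ℝ)..1, (‖w‖ ^ 2 / 2 + h ^ 2 / 2 * gradSq u (x + s • h • n)) := by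
    refine intervalIntegral.integral_mono_on zero_le_one (hcont.intervalIntegrable _ _)
      (Continuous.intervalIntegrable (by fun_prop) _ _) fun s _ => ?_
    have a1 := dir_le u (x + s • h • n) n hn
    have a2 := real_inner_le_norm w (fderiv ℝ u (x + s • h • n) (h • n))
    have a3 : ‖fderiv ℝ u (x + s • h • n) (h • n)‖ ^ 2 ≤ h ^ 2 * gradSq u (x + s • h • n) := by
      rw [map_smul, norm_smul, mul_pow, Real.norm_eq_abs, sq_abs]
      gcongr
    nlinarith [sq_nonneg (‖w‖ - ‖fderiv ℝ u (x + s • h • n) (h • n)‖)]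
  rw [intervalIntegral.integral_add (by simp) (Continuous.intervalIntegrable (by fun_prop) _ _),
    intervalIntegral.integral_const_mul] at h5
  rw [← h4] at h5
  simp at h5
  linarith

lemma diff_bound {u : E3 → E3} (hu : ContDiff ℝ 1 u)
    (hper : ∀ (x : E3) (k : Fin 3), u (x + e3 k) = u x) (n : E3) (hn : ‖n‖ = 1) (h : ℝ) :
    ∫ x in fundDom, ‖u (x + h • n) - u x‖ ^ 2 ≤ h ^ 2 * ∫ x in fundDom, gradSq u x := by
  have hg := gradSq_cont hu
  have huc := hu.continuous
  have hcF : Continuous (Function.uncurry fun (s : ℝ) (x : E3) => gradSq u (x + s • h • n)) := by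
    unfold Function.uncurry; fun_prop
  have hint : Integrable (Function.uncurry fun (s : ℝ) (x : E3) => gradSq u (x + s • h • n))
      ((volume.restrict (Set.uIoc (0:ℝ) 1)).prod (volume.restrict fundDom)) := by
    rw [Measure.prod_restrict]
    refine (hcF.locallyIntegrable.integrableOn_isCompact
      (isCompact_uIcc.prod fundDom_bdd.isCompact_closure)).mono_set
      (Set.prod_mono Set.uIoc_subset_uIcc subset_closure)
  have hswap := intervalIntegral_integral_swap hint
  have hconst : ∀ s : ℝ, ∫ x in fundDom, gradSq u (x + s • h • n) = ∫ x in fundDom, gradSq u x :=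
    fun s => trans_int (gradSq_per hper) _
  simp only [hconst] at hswap
  simp at hswap
  rw [hswap, ← integral_const_mul]
  refine integral_mono (fundDom_intOn (by fun_prop)) ?_ fun x => pt_bound hu x n hn h
  refine Integrable.const_mul ?_ _
  have := hint.integral_prod_right
  refine this.congr (Filter.Eventually.of_forall fun x => ?_)
  simp [intervalIntegral.integral_of_le, Function.uncurry]

lemma young (v w : E3) {b d : ℝ} (hb : 0 < b) (hd : 0 < d) :
    |⟪v, w⟫| ≤ (b / d * ‖v‖ ^ 2 + d / b * ‖w‖ ^ 2) / 2 := by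
  refine (abs_real_inner_le_norm v w).trans ?_
  have := sq_nonneg (b * ‖v‖ - d * ‖w‖)
  have e : (b / d * ‖v‖ ^ 2 + d / b * ‖w‖ ^ 2) / 2 - ‖v‖ * ‖w‖ =
    (b * ‖v‖ - d * ‖w‖) ^ 2 / (2 * b * d) := by field_simp; ring
  have : 0 ≤ (b * ‖v‖ - d * ‖w‖) ^ 2 / (2 * b * d) := by positivity
  linarith

lemma key {u : E3 → E3} (hu : ContDiff ℝ 1 u)
    (hper : ∀ (x : E3) (k : Fin 3), u (x + e3 k) = u x) (n : E3) (hn : ‖n‖ = 1) {a b : ℝ}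
    (ha : 0 < a) (hb : 0 < b) :
    |(∫ x in fundDom, ⟪u x, u (x + b • n)⟫) - ∫ x in fundDom, ⟪u x, u (x + a • n)⟫| ≤
      ((a + b) / 2 * ∫ x in fundDom, gradSq u x) * |b - a| := by
  rcases eq_or_ne a b with rfl | hab
  · simp
  have hd : 0 < |b - a| := abs_pos.2 (sub_ne_zero.2 hab.symm)
  set d := |b - a| with hdd
  have huc := hu.continuous
  have hp := diff_bound hu hper n hn b
  have hq := diff_bound hu hper n hn a
  have hpq := diff_bound hu hper n hn (b - a)
  rw [← trans_int (f := fun x => ‖u (x + (b - a) • n) - u x‖ ^ 2)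
    (fun x k => by rw [hper, add_right_comm, hper]) (a • n)] at hpq
  have hsq : (b - a) ^ 2 = d ^ 2 := (sq_abs _).symm
  rw [hsq] at hpq
  have hN : ∀ c : ℝ, ∫ x in fundDom, ‖u (x + c • n)‖ ^ 2 = ∫ x in fundDom, ‖u x‖ ^ 2 :=
    fun c => trans_int (f := fun x => ‖u x‖ ^ 2) (fun x k => by rw [hper]) _
  set G := ∫ x in fundDom, gradSq u x
  have hexp : ∀ c : ℝ, ∫ x in fundDom, ‖u (x + c • n) - u x‖ ^ 2 =
      2 * (∫ x in fundDom, ‖u x‖ ^ 2) - 2 * ∫ x in fundDom, ⟪u x, u (x + c • n)⟫ := by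
    intro c
    have : ∀ x, ‖u (x + c • n) - u x‖ ^ 2 =
        (‖u (x + c • n)‖ ^ 2 + ‖u x‖ ^ 2) - 2 * ⟪u x, u (x + c • n)⟫ := by
      intro x
      rw [norm_sub_sq_real, real_inner_comm]; ring
    simp_rw [this]
    rw [integral_sub (fundDom_intOn (by fun_prop)) (fundDom_intOn (by fun_prop)),
      integral_add (fundDom_intOn (by fun_prop)) (fundDom_intOn (by fun_prop)),
      integral_const_mul, hN]
    ring
  have hdiff : (∫ x in fundDom, ⟪u x, u (x + b • n)⟫) - ∫ x in fundDom, ⟪u x, u (x + a • n)⟫ =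
      (∫ x in fundDom, (‖u (x + a • n) - u x‖ ^ 2 - ‖u (x + b • n) - u x‖ ^ 2)) / 2 := by
    rw [integral_sub (fundDom_intOn (by fun_prop)) (fundDom_intOn (by fun_prop)), hexp, hexp]
    ring
  rw [hdiff, abs_div, abs_two]
  have hbd : |∫ x in fundDom, (‖u (x + a • n) - u x‖ ^ 2 - ‖u (x + b • n) - u x‖ ^ 2)| ≤
      ∫ x in fundDom, ((a + b) / d / 2 * ‖u (x + a • n + (b - a) • n) - u (x + a • n)‖ ^ 2
        + (d / b / 2 * ‖u (x + b • n) - u x‖ ^ 2 + d / a / 2 * ‖u (x + a • n) - u x‖ ^ 2)) := by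
    rw [← Real.norm_eq_abs]
    refine norm_integral_le_of_norm_le (fundDom_intOn (by fun_prop))
      (Filter.Eventually.of_forall fun x => ?_)
    have e1 : x + a • n + (b - a) • n = x + b • n := by
      rw [add_assoc, ← add_smul]; congr 2; ring
    rw [e1]
    set p := u (x + b • n) - u x with hpdef
    set q := u (x + a • n) - u x with hqdef
    have e2 : u (x + b • n) - u (x + a • n) = p - q := by rw [hpdef, hqdef]; abel
    rw [e2]
    clear_value p q
    have y1 := young (p - q) p hb hd
    have y2 := young (p - q) q ha hd
    have e3 : ‖q‖ ^ 2 - ‖p‖ ^ 2 = -(⟪p - q, p⟫ + ⟪p - q, q⟫) := by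
      rw [inner_sub_left, inner_sub_left, real_inner_self_eq_norm_sq, real_inner_self_eq_norm_sq,
        real_inner_comm q p]; ring
    rw [e3, norm_neg, Real.norm_eq_abs]
    refine (abs_add_le _ _).trans ((add_le_add y1 y2).trans (le_of_eq ?_))
    ring
  rw [integral_add (fundDom_intOn (by fun_prop)) (fundDom_intOn (by fun_prop)),
    integral_add (fundDom_intOn (by fun_prop)) (fundDom_intOn (by fun_prop)),
    integral_const_mul, integral_const_mul, integral_const_mul] at hbd
  have f1 := mul_le_mul_of_nonneg_left hpq (show 0 ≤ (a + b) / d / 2 by positivity)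
  have f2 := mul_le_mul_of_nonneg_left hp (show 0 ≤ d / b / 2 by positivity)
  have f3 := mul_le_mul_of_nonneg_left hq (show 0 ≤ d / a / 2 by positivity)
  have g : (a + b) / d / 2 * (d ^ 2 * G) + (d / b / 2 * (b ^ 2 * G) + d / a / 2 * (a ^ 2 * G)) =
      ((a + b) / 2 * G * d) * 2 := by field_simp; ring
  rw [div_le_iff₀ two_pos]
  linarith

lemma sph_int {u : E3 → E3} (huc : Continuous u) (c : ℝ) :
    Integrable (fun n : Metric.sphere (0:E3) 1 =>
      ∫ x in fundDom, ⟪u x, u (x + c • (n : E3))⟫) sphμ := by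
  have hc : Continuous (fun n : Metric.sphere (0:E3) 1 =>
      ∫ x in fundDom, ⟪u x, u (x + c • (n : E3))⟫) := by
    have := continuous_parametric_integral_of_continuous (μ := (volume : Measure E3).restrict fundDom)
      (f := fun (n : Metric.sphere (0:E3) 1) (x : E3) => ⟪u x, u (x + c • (n : E3))⟫)
      (by unfold Function.uncurry; fun_prop) fundDom_bdd.isCompact_closure
    rw [Measure.restrict_restrict isClosed_closure.measurableSet,
      Set.inter_eq_right.2 subset_closure] at this
    exact this
  have : IsFiniteMeasure sphμ := by unfold sphμ; infer_instance
  exact hc.integrable_of_hasCompactSupport (HasCompactSupport.of_compactSpace _)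

/-- For `u ∈ H¹(𝕋³;ℝ³)` and the spherically averaged autocorrelation
`Γ̄(ℓ) = (1/(4π)) ∫_{S²} ∫_{𝕋³} u(x)·u(x+ℓn) dx dS(n)`, we have
`|Γ̄'(ℓ)| ≤ ℓ ‖∇u‖²_{L²}` for all `ℓ > 0`. -/
theorem statement13 (u : E3 → E3) (hu : ContDiff ℝ 1 u)
    (hper : ∀ (x : E3) (k : Fin 3), u (x + e3 k) = u x)
    (ℓ : ℝ) (hℓ : 0 < ℓ) :
    |deriv (fun ℓ' : ℝ => (1 / (4 * π)) * ∫ n : Metric.sphere (0:E3) 1,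
        (∫ x in fundDom, ⟪u x, u (x + ℓ' • (n : E3))⟫) ∂sphμ) ℓ|
      ≤ ℓ * ∫ x in fundDom, gradSq u x := by
  have : IsFiniteMeasure sphμ := by unfold sphμ; infer_instance
  set G := ∫ x in fundDom, gradSq u x with hG
  have hG0 : 0 ≤ G := integral_nonneg fun x => gradSq_nonneg u x
  have hlip : ∀ b : ℝ, 0 < b →
      ‖(1 / (4 * π)) * (∫ n : Metric.sphere (0:E3) 1,
        (∫ x in fundDom, ⟪u x, u (x + b • (n : E3))⟫) ∂sphμ) -
       (1 / (4 * π)) * (∫ n : Metric.sphere (0:E3) 1,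
        (∫ x in fundDom, ⟪u x, u (x + ℓ • (n : E3))⟫) ∂sphμ)‖ ≤ ((ℓ + b) / 2 * G) * ‖b - ℓ‖ := by
    intro b hb
    rw [← mul_sub, ← integral_sub (sph_int hu.continuous b) (sph_int hu.continuous ℓ), norm_mul]
    have h1 := norm_integral_le_of_norm_le_const (μ := sphμ)
      (f := fun n : Metric.sphere (0:E3) 1 => (∫ x in fundDom, ⟪u x, u (x + b • (n : E3))⟫) -
        ∫ x in fundDom, ⟪u x, u (x + ℓ • (n : E3))⟫) (C := ((ℓ + b) / 2 * G) * ‖b - ℓ‖)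
      (Filter.Eventually.of_forall fun n => key hu hper n (by simp) hℓ hb)
    rw [sphμ_univ] at h1
    have h2 : ‖(1 / (4 * π) : ℝ)‖ = 1 / (4 * π) := Real.norm_of_nonneg (by positivity)
    rw [h2]
    refine (mul_le_mul_of_nonneg_left h1 (by positivity)).trans (le_of_eq ?_)
    field_simp
  rw [← Real.norm_eq_abs]
  refine le_of_forall_pos_le_add fun ε hε => ?_
  refine norm_deriv_le_of_lip' (by positivity) ?_
  have ht : Tendsto (fun b : ℝ => (ℓ + b) / 2 * G) (𝓝 ℓ) (𝓝 (ℓ * G)) := by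
    have : Continuous (fun b : ℝ => (ℓ + b) / 2 * G) := by fun_prop
    convert this.tendsto ℓ using 2
    ring
  filter_upwards [lt_mem_nhds hℓ, ht.eventually_lt_const (show ℓ * G < ℓ * G + ε by linarith)]
    with b hb hb2
  refine (hlip b hb).trans ?_
  gcongr
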